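/- The quotient group Λ5♯/Λ5 has exactly 128 elements, consisting of: the zero coset; exactly 10 cosets of minimal norm 1/2, each of order 4; exactly 32 cosets of minimal norm 5/8, each of order 8; exactly 20 cosets of minimal norm 1, each of order 2; exactly 20 cosets of minimal norm 3/2, each of order 4; exactly 32 cosets of minimal norm 13/8, each of order 8; exactly 11 cosets of minimal norm 2, each of order 2; and exactly 2 cosets of minimal norm 5/2, each of order 4. Here the minimal norm of a coset is the minimum of ‖x‖² over x in the coset. -/

import Mathlib

noncomputable section

open scoped RealInnerProductSpace

/-- `ℝ^n` with the standard inner product. -/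
abbrev E (n : ℕ) := EuclideanSpace ℝ (Fin n)

/-- The standard basis vector `ε i`. -/
def εv {n : ℕ} (i : Fin n) : E n := EuclideanSpace.single i 1

/-- The vector of `ℝ^n` with the given coordinates. -/
def vec {n : ℕ} (x : Fin n → ℝ) : E n := (WithLp.equiv 2 (Fin n → ℝ)).symm x

/-- The vector of `ℝ^n` with the given integer coordinates. -/
def intVec {n : ℕ} (x : Fin n → ℤ) : E n := (WithLp.equiv 2 (Fin n → ℝ)).symm fun i => (x i : ℝ)

/-- A lattice is integral if all pairwise inner products of its elements are integers. -/
def LatticeIsIntegral {n : ℕ} (L : Submodule ℤ (E n)) : Prop :=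
  ∀ x ∈ L, ∀ y ∈ L, ∃ k : ℤ, ⟪x, y⟫ = (k : ℝ)

/-- Two lattices are isometric if a linear isometry of the ambient space carries
one onto the other. -/
def IsometricLattices {n : ℕ} (L M : Submodule ℤ (E n)) : Prop :=
  ∃ g : E n ≃ₗᵢ[ℝ] E n, g '' (L : Set (E n)) = (M : Set (E n))

/-- The laminated lattice `Λ₅ = {√2·x : x ∈ ℤ⁵, ∑ x i even} ≅ √2·D₅`. -/
def Λ5 : Submodule ℤ (E 5) :=
  Submodule.span ℤ
    {v : E 5 | ∃ x : Fin 5 → ℤ, Even (x 0 + x 1 + x 2 + x 3 + x 4) ∧ v = Real.sqrt 2 • intVec x}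

/-- The dual lattice `Λ♯ = {x : ⟪x,y⟫ ∈ ℤ for all y ∈ Λ}`. -/
def dualLattice {n : ℕ} (Λ : Submodule ℤ (E n)) : Submodule ℤ (E n) where
  carrier := {x | ∀ y ∈ Λ, ∃ k : ℤ, ⟪x, y⟫ = (k : ℝ)}
  zero_mem' := fun y _ => ⟨0, by simp⟩
  add_mem' := by
    intro a b ha hb y hy
    obtain ⟨k, hk⟩ := ha y hy
    obtain ⟨l, hl⟩ := hb y hy
    exact ⟨k + l, by rw [inner_add_left, hk, hl]; push_cast; ring⟩
  smul_mem' := by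
    intro c x hx y hy
    obtain ⟨k, hk⟩ := hx y hy
    refine ⟨c * k, ?_⟩
    rw [← Int.cast_smul_eq_zsmul ℝ c x, real_inner_smul_left, hk]
    push_cast
    ring

/-- The quotient abelian group `Λ♯/Λ`. -/
abbrev DualQuot {n : ℕ} (Λ : Submodule ℤ (E n)) :=
  (dualLattice Λ) ⧸ (Λ.comap (dualLattice Λ).subtype)

/-- The coset `c ∈ Λ♯/Λ` has minimal norm `m`, i.e. `m` is the minimum of `‖x‖²`
over `x` in the coset `c`. -/
def CosetMinNorm {n : ℕ} (Λ : Submodule ℤ (E n)) (c : DualQuot Λ) (m : ℝ) : Prop :=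
  IsLeast {r : ℝ | ∃ x : dualLattice Λ, Submodule.Quotient.mk x = c ∧ r = ‖(x : E n)‖ ^ 2} m

/-!
In units of `√2/4` the lattice `√2·D_n` becomes `4·D_n`, and its dual becomes the lattice of integer
vectors whose coordinates all have the same parity. A class of the quotient is determined by this
parity, by the residues of the coordinates modulo `4` (`0` or `2` in the even case, `±1` in the odd
case), and by one more bit, which changes when a single coordinate is translated by `4`.

If some residue is `2`, the bit can be changed by turning a coordinate `2` into `-2`, so it does not
affect the minimal length, which is attained by coordinates `0` and `±2`. If all residues are `0`,
changing the bit costs a coordinate `±4`; in the odd case it turns one of the coordinates `±1` into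
`∓3`. The order of a class is read off from the coordinate sum.
-/

section CoordinateLattices

variable {n : ℕ}

theorem dvd_single_of_dvd {ι R : Type*} [DecidableEq ι] [SemigroupWithZero R] {d x : R}
    (h : d ∣ x) (j i : ι) : d ∣ (Pi.single j x : ι → R) i := by
  rw [Pi.single_apply]
  split_ifs
  exacts [h, dvd_zero d]

/-- The lattice `4·D_n`: the coordinates of `√2·D_n` in units of `√2/4`. -/
def fourD (n : ℕ) : Submodule ℤ (Fin n → ℤ) where
  carrier := {a | (∀ i, 4 ∣ a i) ∧ 8 ∣ ∑ i, a i}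
  zero_mem' := by simp
  add_mem' := fun ha hb => ⟨fun i => dvd_add (ha.1 i) (hb.1 i), by
    simpa only [Pi.add_apply, Finset.sum_add_distrib] using dvd_add ha.2 hb.2⟩
  smul_mem' := fun k _ ha => ⟨fun i => (ha.1 i).mul_left k, by
    simpa only [Pi.smul_apply, smul_eq_mul, ← Finset.mul_sum] using ha.2.mul_left k⟩

/-- The integer vectors whose coordinates all have the same parity: the coordinates of the dual
of `√2·D_n` in units of `√2/4`. -/
def sameParity (n : ℕ) : Submodule ℤ (Fin n → ℤ) where
  carrier := {a | ∀ i j, a i ≡ a j [ZMOD 2]}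
  zero_mem' := fun _ _ => rfl
  add_mem' := fun ha hb i j => (ha i j).add (hb i j)
  smul_mem' := fun k _ ha i j => (ha i j).mul_left k

theorem mem_fourD {a : Fin n → ℤ} : a ∈ fourD n ↔ (∀ i, 4 ∣ a i) ∧ 8 ∣ ∑ i, a i :=
  Iff.rfl

theorem mem_sameParity_iff_forall_eight_dvd {a : Fin n → ℤ} :
    a ∈ sameParity n ↔ ∀ b ∈ fourD n, 8 ∣ a ⬝ᵥ b := by
  refine ⟨fun ha b hb => ?_, fun h i j => ?_⟩
  · rcases isEmpty_or_nonempty (Fin n) with _ | ⟨⟨j⟩⟩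
    · simp [dotProduct]
    · have split : a ⬝ᵥ b = ∑ i, (a i - a j) * b i + a j * ∑ i, b i := by
        simp only [dotProduct, Finset.mul_sum, ← Finset.sum_add_distrib, sub_mul, sub_add_cancel]
      rw [split]
      exact dvd_add (Finset.dvd_sum fun i _ => mul_dvd_mul (ha j i).dvd (hb.1 i))
        (hb.2.mul_left _)
  · have test_mem : Pi.single i 4 - Pi.single j 4 ∈ fourD n :=
      ⟨fun k => dvd_sub (dvd_single_of_dvd dvd_rfl i k) (dvd_single_of_dvd dvd_rfl j k), by simp⟩
    have := h _ test_mem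
    rw [dotProduct_sub, dotProduct_single, dotProduct_single] at this
    rw [Int.modEq_iff_dvd]
    omega

end CoordinateLattices

section ScaledLattice

variable {n : ℕ}

/-- The vector of `ℝ^n` with integer coordinates `a` in units of `√2/4`. -/
def scaledVec (n : ℕ) : (Fin n → ℤ) →ₗ[ℤ] E n where
  toFun a := (√2 / 4) • intVec a
  map_add' a b := by ext i; simp [intVec, mul_add]
  map_smul' k a := by ext i; simp [intVec, mul_left_comm]

theorem scaledVec_apply (a : Fin n → ℤ) (i : Fin n) : scaledVec n a i = √2 / 4 * a i := by
  simp [scaledVec, intVec]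

theorem scaledVec_injective : Function.Injective (scaledVec n) := by
  intro a b h
  ext i
  have hi := congrArg (fun v : E n => v i) h
  simpa [scaledVec_apply] using hi

theorem inner_scaledVec (v : E n) (a : Fin n → ℤ) :
    ⟪v, scaledVec n a⟫ = √2 / 4 * ∑ i, v i * a i := by
  simp only [PiLp.inner_apply, scaledVec_apply, RCLike.inner_apply, conj_trivial, Finset.mul_sum]
  exact Finset.sum_congr rfl fun i _ => by ring

theorem inner_scaledVec_scaledVec (a b : Fin n → ℤ) :
    ⟪scaledVec n a, scaledVec n b⟫ = ((a ⬝ᵥ b : ℤ) : ℝ) / 8 := by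
  have sq_sqrt_two : √2 * √2 = 2 := Real.mul_self_sqrt zero_le_two
  simp only [inner_scaledVec, scaledVec_apply, dotProduct, mul_assoc, ← Finset.mul_sum]
  push_cast
  linear_combination (∑ i, (a i : ℝ) * b i) / 16 * sq_sqrt_two

theorem norm_sq_scaledVec (a : Fin n → ℤ) :
    ‖scaledVec n a‖ ^ 2 = ((∑ i, a i ^ 2 : ℤ) : ℝ) / 8 := by
  rw [← real_inner_self_eq_norm_sq, inner_scaledVec_scaledVec]
  simp only [dotProduct, pow_two]

/-- The lattice `√2·D_n`. -/
def sqrtTwoD (n : ℕ) : Submodule ℤ (E n) :=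
  (fourD n).map (scaledVec n)

theorem scaledVec_mem_sqrtTwoD {a : Fin n → ℤ} : scaledVec n a ∈ sqrtTwoD n ↔ a ∈ fourD n :=
  scaledVec_injective.mem_set_image

theorem Λ5_eq_sqrtTwoD : Λ5 = sqrtTwoD 5 := by
  refine le_antisymm (Submodule.span_le.2 ?_) ?_
  · rintro _ ⟨x, hx, rfl⟩
    refine ⟨(4 : ℤ) • x, ⟨fun i => dvd_mul_right 4 (x i), ?_⟩, ?_⟩
    · obtain ⟨k, hk⟩ := hx
      exact ⟨k, by simp only [Pi.smul_apply, smul_eq_mul, Fin.sum_univ_five]; linarith⟩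
    · ext i
      simp [scaledVec_apply, intVec]
      ring
  · rintro _ ⟨a, ⟨ha, hsum⟩, rfl⟩
    choose x hx using ha
    refine Submodule.subset_span ⟨x, ?_, ?_⟩
    · rw [Fin.sum_univ_five] at hsum
      have := hx 0; have := hx 1; have := hx 2; have := hx 3; have := hx 4
      rw [Int.even_iff]
      omega
    · ext i
      simp [scaledVec_apply, intVec, hx]
      ring

theorem scaledVec_mem_dualLattice {a : Fin n → ℤ} :
    scaledVec n a ∈ dualLattice (sqrtTwoD n) ↔ a ∈ sameParity n := by
  have integral_iff (m : ℤ) : (∃ k : ℤ, (m : ℝ) / 8 = k) ↔ 8 ∣ m := by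
    refine exists_congr fun k => ?_
    rw [div_eq_iff (by norm_num), mul_comm]
    norm_cast
  rw [mem_sameParity_iff_forall_eight_dvd]
  change (∀ y ∈ scaledVec n '' fourD n, ∃ k : ℤ, ⟪scaledVec n a, y⟫ = k) ↔ _
  simp only [Set.forall_mem_image, inner_scaledVec_scaledVec, integral_iff, SetLike.mem_coe]

theorem exists_scaledVec_eq_of_mem_dualLattice {v : E n} (hv : v ∈ dualLattice (sqrtTwoD n)) :
    ∃ a, scaledVec n a = v := by
  have sq_sqrt_two : √2 * √2 = 2 := Real.mul_self_sqrt zero_le_two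
  have integral (i : Fin n) : ∃ k : ℤ, √2 / 4 * (v i * 8) = k := by
    have test_mem : Pi.single i 8 ∈ fourD n :=
      ⟨dvd_single_of_dvd (by norm_num) i, by simp⟩
    obtain ⟨k, hk⟩ := hv _ (scaledVec_mem_sqrtTwoD.2 test_mem)
    exact ⟨k, by simpa [inner_scaledVec, Pi.single_apply] using hk⟩
  choose a ha using integral
  refine ⟨a, ?_⟩
  ext i
  rw [scaledVec_apply, ← ha]
  linear_combination v i / 2 * sq_sqrt_two

theorem dualLattice_sqrtTwoD : dualLattice (sqrtTwoD n) = (sameParity n).map (scaledVec n) := by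
  ext v
  constructor
  · intro hv
    obtain ⟨a, rfl⟩ := exists_scaledVec_eq_of_mem_dualLattice hv
    exact ⟨a, scaledVec_mem_dualLattice.1 hv, rfl⟩
  · rintro ⟨a, ha, rfl⟩
    exact scaledVec_mem_dualLattice.2 ha

end ScaledLattice

section Cosets

variable {n : ℕ}

theorem fourD_le_sameParity : fourD n ≤ sameParity n := fun a ha i j => by
  rw [Int.modEq_iff_dvd]
  have := ha.1 i
  have := ha.1 j
  omega

/-- The class in `Λ♯/Λ`, for `Λ = √2·D_n`, of the dual vector with coordinates `a` in units
of `√2/4`. -/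
def dualCoset (n : ℕ) : sameParity n →ₗ[ℤ] DualQuot (sqrtTwoD n) :=
  Submodule.mkQ _ ∘ₗ (scaledVec n).restrict fun _ => scaledVec_mem_dualLattice.2

theorem dualCoset_eq_zero {a : sameParity n} : dualCoset n a = 0 ↔ (a : Fin n → ℤ) ∈ fourD n :=
  (Submodule.Quotient.mk_eq_zero _).trans scaledVec_mem_sqrtTwoD

theorem dualCoset_eq_dualCoset {a b : sameParity n} :
    dualCoset n a = dualCoset n b ↔ (a - b : Fin n → ℤ) ∈ fourD n := by
  rw [← sub_eq_zero, ← map_sub, dualCoset_eq_zero, Submodule.coe_sub]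

theorem nsmul_dualCoset_eq_zero {a : sameParity n} {k : ℕ} :
    k • dualCoset n a = 0 ↔ (k • a : Fin n → ℤ) ∈ fourD n := by
  rw [← map_nsmul, dualCoset_eq_zero, Submodule.coe_smul_of_tower]

theorem dualCoset_surjective : Function.Surjective (dualCoset n) := by
  intro c
  obtain ⟨⟨v, hv⟩, rfl⟩ := Submodule.Quotient.mk_surjective _ c
  obtain ⟨a, ha, rfl⟩ := dualLattice_sqrtTwoD.le hv
  exact ⟨⟨a, ha⟩, rfl⟩

/-- The squared lengths of the vectors in the coset `a + 4·D_n`. -/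
def cosetSqNorms (a : Fin n → ℤ) : Set ℤ :=
  (fun b => ∑ i, b i ^ 2) '' {b | b - a ∈ fourD n}

theorem setOf_norm_sq_dualCoset (a : sameParity n) :
    {r : ℝ | ∃ x : dualLattice (sqrtTwoD n),
      Submodule.Quotient.mk x = dualCoset n a ∧ r = ‖(x : E n)‖ ^ 2} =
      (fun m : ℤ => (m : ℝ) / 8) '' cosetSqNorms (a : Fin n → ℤ) := by
  ext r
  constructor
  · rintro ⟨⟨v, hv⟩, hx, rfl⟩
    obtain ⟨b, hb, rfl⟩ := dualLattice_sqrtTwoD.le hv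
    exact ⟨_, ⟨b, dualCoset_eq_dualCoset (a := ⟨b, hb⟩).1 hx, rfl⟩, (norm_sq_scaledVec b).symm⟩
  · rintro ⟨_, ⟨b, hba, rfl⟩, rfl⟩
    have hb : b ∈ sameParity n := by
      simpa using add_mem (fourD_le_sameParity hba) a.2
    exact ⟨⟨scaledVec n b, scaledVec_mem_dualLattice.2 hb⟩,
      dualCoset_eq_dualCoset (a := ⟨b, hb⟩).2 hba, (norm_sq_scaledVec b).symm⟩

theorem cosetMinNorm_dualCoset {a : sameParity n} {m : ℤ}
    (h : IsLeast (cosetSqNorms (a : Fin n → ℤ)) m) :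
    CosetMinNorm (sqrtTwoD n) (dualCoset n a) (m / 8) := by
  have scale_mono : Monotone fun m : ℤ => (m : ℝ) / 8 := fun _ _ hle =>
    div_le_div_of_nonneg_right (Int.cast_le.2 hle) (by norm_num)
  rw [CosetMinNorm, setOf_norm_sq_dualCoset]
  exact scale_mono.map_isLeast h

end Cosets

section Orders

variable {n : ℕ}

theorem nsmul_mem_fourD {a : Fin n → ℤ} {k : ℕ} :
    k • a ∈ fourD n ↔ (∀ i, 4 ∣ k * a i) ∧ 8 ∣ k * ∑ i, a i := by
  simp only [mem_fourD, Pi.smul_apply, Int.nsmul_eq_mul, Finset.mul_sum]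

theorem addOrderOf_dualCoset_of_odd {a : sameParity n} (hn : Odd n) (ha : ∀ i, Odd (a.1 i)) :
    addOrderOf (dualCoset n a) = 8 := by
  have odd_sum : (∑ i, a.1 i) % 2 = 1 := by
    have sum_modEq : ∑ i, a.1 i ≡ ∑ _i : Fin n, 1 [ZMOD 2] :=
      Int.ModEq.sum fun i _ => Int.odd_iff.1 (ha i)
    simpa [Int.ModEq, Int.odd_iff.1 hn.natCast] using sum_modEq
  refine addOrderOf_eq_prime_pow (p := 2) (n := 2) ?_ ?_
  · rw [nsmul_dualCoset_eq_zero, nsmul_mem_fourD]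
    push_cast
    omega
  · rw [nsmul_dualCoset_eq_zero, nsmul_mem_fourD]
    exact ⟨fun i => by push_cast; omega, by push_cast; omega⟩

theorem addOrderOf_dualCoset_of_even {a : sameParity n} (ha : ∀ i, Even (a.1 i))
    (ha_mem : a.1 ∉ fourD n) :
    addOrderOf (dualCoset n a) = if 4 ∣ ∑ i, a.1 i then 2 else 4 := by
  have even_sum : 2 ∣ ∑ i, a.1 i := Finset.dvd_sum fun i _ => (ha i).two_dvd
  have two_smul_eq_zero : 2 • dualCoset n a = 0 ↔ 4 ∣ ∑ i, a.1 i := by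
    have coord (i : Fin n) : 4 ∣ 2 * a.1 i := mul_dvd_mul_left 2 (ha i).two_dvd
    rw [nsmul_dualCoset_eq_zero, nsmul_mem_fourD]
    push_cast
    simp only [coord, implies_true, true_and]
    omega
  split_ifs with h
  · exact addOrderOf_eq_prime (two_smul_eq_zero.2 h) (mt dualCoset_eq_zero.1 ha_mem)
  · refine addOrderOf_eq_prime_pow (p := 2) (n := 1) (by simpa [two_smul_eq_zero] using h) ?_
    rw [nsmul_dualCoset_eq_zero, nsmul_mem_fourD]
    exact ⟨fun i => by push_cast; omega, by push_cast; omega⟩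

end Orders

section GlueVectors

variable {n : ℕ} {S : Finset (Fin n)} {j : Fin n} {p t : ℤ} {b : Fin n → ℤ}

/-- The vector with coordinates `p - 2` on `S` and `p` elsewhere. For `p = 0, 1` these represent
the same-parity vectors modulo `4`. -/
def residueVec (p : ℤ) (S : Finset (Fin n)) : Fin n → ℤ :=
  fun i => if i ∈ S then p - 2 else p

/-- The translate of `residueVec p S` by `4t` in the coordinate `j`: modulo `4·D_n` it depends
only on the parity of `t`, and for `p, t ∈ {0, 1}` these are the glue vectors of `√2·D_n`. -/
def glueVec (j : Fin n) (p : ℤ) (S : Finset (Fin n)) (t : ℤ) : Fin n → ℤ :=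
  residueVec p S + Pi.single j (4 * t)

theorem residueVec_modEq_two (i : Fin n) : residueVec p S i ≡ p [ZMOD 2] := by
  rw [residueVec, Int.ModEq]
  split_ifs <;> omega

theorem residueVec_one_eq (i : Fin n) : residueVec 1 S i = 1 ∨ residueVec 1 S i = -1 := by
  rw [residueVec]
  split_ifs <;> simp

theorem glueVec_modEq_two (i : Fin n) : glueVec j p S t i ≡ p [ZMOD 2] := by
  have h_single : (Pi.single j (4 * t) : Fin n → ℤ) i ≡ 0 [ZMOD 2] :=
    Int.modEq_zero_iff_dvd.2 (dvd_single_of_dvd (by omega) j i)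
  simpa [glueVec] using (residueVec_modEq_two i).add h_single

theorem glueVec_mem_sameParity : glueVec j p S t ∈ sameParity n := fun i k =>
  (glueVec_modEq_two i).trans (glueVec_modEq_two k).symm

theorem sub_glueVec_mem_fourD :
    b - glueVec j p S t ∈ fourD n ↔
      (∀ i, 4 ∣ b i - residueVec p S i) ∧ 8 ∣ ∑ i, (b i - residueVec p S i) - 4 * t := by
  have coord (i : Fin n) := dvd_sub_left (b := b i - residueVec p S i)
    (dvd_single_of_dvd (dvd_mul_right 4 t) j i)
  simp only [mem_fourD, glueVec, Pi.sub_apply, ← sub_sub, coord, Finset.sum_sub_distrib,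
    Fintype.sum_pi_single']

theorem residueVec_add_single_sub_glueVec_mem_fourD {k : Fin n} {u : ℤ} (h : Even (u - t)) :
    residueVec p S + Pi.single k (4 * u) - glueVec j p S t ∈ fourD n := by
  rw [sub_glueVec_mem_fourD]
  refine ⟨fun i => by simpa using dvd_single_of_dvd (dvd_mul_right 4 u) k i, ?_⟩
  obtain ⟨m, hm⟩ := h
  simp only [Pi.add_apply, add_sub_cancel_left, Fintype.sum_pi_single']
  exact ⟨m, by linarith⟩

theorem sum_glueVec_zero : ∑ i, glueVec j 0 S t i = 4 * t - 2 * S.card := by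
  simp only [glueVec, residueVec, Pi.add_apply, Finset.sum_add_distrib, Finset.sum_ite_mem,
    Finset.univ_inter, Finset.sum_const, Fintype.sum_pi_single', nsmul_eq_mul]
  ring

theorem glueVec_zero_mem_fourD : glueVec j 0 S t ∈ fourD n ↔ S = ∅ ∧ Even t := by
  constructor
  · intro h
    have S_empty : S = ∅ := by
      refine Finset.eq_empty_of_forall_notMem fun i hi => ?_
      have coord : 4 ∣ residueVec 0 S i :=
        (dvd_add_left (dvd_single_of_dvd (dvd_mul_right 4 t) j i)).1 (h.1 i)
      norm_num [residueVec, hi] at coord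
    subst S_empty
    have h_sum := h.2
    rw [sum_glueVec_zero, Finset.card_empty] at h_sum
    exact ⟨rfl, Int.even_iff.2 (by omega)⟩
  · rintro ⟨rfl, ht⟩
    have := residueVec_add_single_sub_glueVec_mem_fourD (p := 0) (S := ∅) (t := 0) (j := j) (k := j)
      (u := t) (by simpa using ht)
    have glueVec_eq_zero : glueVec j 0 ∅ 0 = 0 := by
      ext i
      simp [glueVec, residueVec]
    rwa [glueVec_eq_zero, sub_zero] at this

theorem exists_ne_residueVec (ht : Odd t) (hb : b - glueVec j p S t ∈ fourD n) :
    ∃ k, b k ≠ residueVec p S k := by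
  by_contra! h
  have := (sub_glueVec_mem_fourD.1 hb).2
  simp only [h, sub_self, Finset.sum_const_zero] at this
  have := Int.odd_iff.1 ht
  omega

end GlueVectors

section MinimalNorms

variable {n : ℕ} {S : Finset (Fin n)} {j : Fin n} {t : ℤ}

theorem sq_le_sq_of_le_or_le_neg {R : Type*} [CommRing R] [LinearOrder R] [IsStrictOrderedRing R]
    {c x : R} (hc : 0 ≤ c) (h : c ≤ x ∨ c ≤ -x) : c ^ 2 ≤ x ^ 2 := by
  rw [sq_le_sq, abs_of_nonneg hc]
  exact le_abs.2 h

theorem isLeast_cosetSqNorms_glueVec_zero (h : t = 0 ∨ t = 1 ∧ S.Nonempty) :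
    IsLeast (cosetSqNorms (glueVec j 0 S t)) (4 * S.card) := by
  have sum_eq : ∑ i, (if i ∈ S then 4 else 0) = 4 * (S.card : ℤ) := by
    simp [mul_comm]
  constructor
  · obtain ⟨k, hk⟩ : ∃ k, t = 0 ∨ t = 1 ∧ k ∈ S := by
      rcases h with ht | ⟨ht, k, hk⟩
      exacts [⟨j, .inl ht⟩, ⟨k, .inr ⟨ht, hk⟩⟩]
    refine ⟨residueVec 0 S + Pi.single k (4 * t),
      residueVec_add_single_sub_glueVec_mem_fourD (by simp), ?_⟩
    refine (Finset.sum_congr rfl fun i _ => ?_).trans sum_eq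
    simp only [Pi.add_apply, residueVec, Pi.single_apply]
    grind
  · rintro _ ⟨b, hb, rfl⟩
    rw [← sum_eq]
    refine Finset.sum_le_sum fun i _ => ?_
    split_ifs with hi
    · have := (sub_glueVec_mem_fourD.1 hb).1 i
      rw [residueVec, if_pos hi] at this
      exact sq_le_sq_of_le_or_le_neg (c := (2 : ℤ)) zero_le_two (by omega)
    · positivity

theorem isLeast_cosetSqNorms_glueVec_zero_empty (ht : Odd t) :
    IsLeast (cosetSqNorms (glueVec j 0 ∅ t)) 16 := by
  constructor
  · refine ⟨residueVec 0 ∅ + Pi.single j (4 * 1),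
      residueVec_add_single_sub_glueVec_mem_fourD (odd_one.sub_odd ht), ?_⟩
    simp [residueVec, Pi.single_apply, ite_pow]
  · rintro _ ⟨b, hb, rfl⟩
    obtain ⟨k, hk⟩ := exists_ne_residueVec ht hb
    have := (sub_glueVec_mem_fourD.1 hb).1 k
    simp only [residueVec, Finset.notMem_empty, if_false] at hk this
    calc (16 : ℤ) = 4 ^ 2 := by norm_num
      _ ≤ b k ^ 2 := sq_le_sq_of_le_or_le_neg zero_le_four (by omega)
      _ ≤ ∑ i, b i ^ 2 :=
        Finset.single_le_sum (f := fun i => b i ^ 2) (fun i _ => sq_nonneg (b i))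
          (Finset.mem_univ k)

theorem isLeast_cosetSqNorms_glueVec_one_zero :
    IsLeast (cosetSqNorms (glueVec j 1 S 0)) n := by
  have sum_eq : ∑ _i : Fin n, (1 : ℤ) = n := by simp
  constructor
  · refine ⟨residueVec 1 S + Pi.single j (4 * 0),
      residueVec_add_single_sub_glueVec_mem_fourD (by simp), ?_⟩
    refine (Finset.sum_congr rfl fun i _ => ?_).trans sum_eq
    simpa using residueVec_one_eq i
  · rintro _ ⟨b, hb, rfl⟩
    rw [← sum_eq]
    refine Finset.sum_le_sum fun i _ => ?_
    have := (sub_glueVec_mem_fourD.1 hb).1 i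
    have := residueVec_one_eq (S := S) i
    exact sq_le_sq_of_le_or_le_neg (c := (1 : ℤ)) zero_le_one (by omega)

theorem isLeast_cosetSqNorms_glueVec_one_odd (ht : Odd t) :
    IsLeast (cosetSqNorms (glueVec j 1 S t)) (n + 8) := by
  have sum_eq (k : Fin n) : ∑ i, (1 + (Pi.single k 8 : Fin n → ℤ) i) = n + 8 := by
    simp [Finset.sum_add_distrib]
  constructor
  · have odd_residue : Odd (residueVec 1 S j) := by
      rcases residueVec_one_eq (S := S) j with h | h <;> rw [h] <;> decide
    refine ⟨residueVec 1 S + Pi.single j (4 * -residueVec 1 S j),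
      residueVec_add_single_sub_glueVec_mem_fourD (odd_residue.neg.sub_odd ht), ?_⟩
    refine (Finset.sum_congr rfl fun i _ => ?_).trans (sum_eq j)
    have := residueVec_one_eq (S := S) i
    simp only [Pi.add_apply, Pi.single_apply]
    grind
  · rintro _ ⟨b, hb, rfl⟩
    obtain ⟨k, hk⟩ := exists_ne_residueVec ht hb
    rw [← sum_eq k]
    refine Finset.sum_le_sum fun i _ => ?_
    have := (sub_glueVec_mem_fourD.1 hb).1 i
    have := residueVec_one_eq (S := S) i
    rcases eq_or_ne i k with rfl | hik
    · rw [Pi.single_eq_same]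
      exact sq_le_sq_of_le_or_le_neg (c := (3 : ℤ)) (by norm_num) (by omega)
    · rw [Pi.single_eq_of_ne hik]
      exact sq_le_sq_of_le_or_le_neg (c := (1 : ℤ)) zero_le_one (by omega)

end MinimalNorms

section Classification

variable {n : ℕ} [NeZero n]

/-- Labels `(p, S, t)` of the glue vectors of `√2·D_n`: the parity `p` of the coordinates, the set
`S` fixing them modulo `4`, and the parity `t` of the translation by `4` in one coordinate. -/
abbrev GlueIndex (n : ℕ) := Bool × Finset (Fin n) × Bool

/-- The class of a glue vector in `Λ♯/Λ`, for `Λ = √2·D_n`. -/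
def glueCoset (g : GlueIndex n) : DualQuot (sqrtTwoD n) :=
  dualCoset n ⟨glueVec 0 g.1.toInt g.2.1 g.2.2.toInt, glueVec_mem_sameParity⟩

/-- Eight times the minimal norm of the class of a glue vector. -/
def glueSqNorm : GlueIndex n → ℤ
  | (false, S, t) => if S = ∅ ∧ t then 16 else 4 * S.card
  | (true, _, t) => if t then n + 8 else n

/-- The order of the class of a glue vector, for odd `n`. -/
def glueOrder : GlueIndex n → ℕ
  | (false, S, t) => if S = ∅ ∧ !t then 1 else if Even S.card then 2 else 4
  | (true, _, _) => 8

theorem glueCoset_injective : Function.Injective (glueCoset (n := n)) := by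
  rintro ⟨p, S, t⟩ ⟨q, T, u⟩ h
  obtain ⟨coord, h_sum⟩ := sub_glueVec_mem_fourD.1 (dualCoset_eq_dualCoset.1 h)
  have residue (i : Fin n) : 4 ∣ residueVec p.toInt S i - residueVec q.toInt T i := by
    have : 4 ∣ glueVec 0 p.toInt S t.toInt i - residueVec q.toInt T i := coord i
    rwa [glueVec, Pi.add_apply, add_sub_right_comm,
      dvd_add_left (dvd_single_of_dvd (dvd_mul_right 4 _) 0 i)] at this
  obtain rfl : p = q := by
    have := residue 0
    cases p <;> cases q <;> simp only [residueVec, Bool.toInt_true, Bool.toInt_false] at this <;>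
      grind
  obtain rfl : S = T := by
    ext i
    have := residue i
    simp only [residueVec] at this
    grind
  have : 8 ∣ 4 * t.toInt - 4 * u.toInt := by
    simpa only [glueVec, Pi.add_apply, add_sub_cancel_left, Fintype.sum_pi_single'] using h_sum
  obtain rfl : t = u := by
    cases t <;> cases u <;> simp only [Bool.toInt_true, Bool.toInt_false] at this <;> grind
  rfl

theorem exists_sub_glueVec_mem_fourD {a : Fin n → ℤ} (ha : a ∈ sameParity n) :
    ∃ (p : Bool) (S : Finset (Fin n)) (t : Bool),
      a - glueVec 0 p.toInt S t.toInt ∈ fourD n := by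
  have exists_toInt (m : ℤ) : ∃ p : Bool, 2 ∣ m - p.toInt := by
    rcases Int.even_or_odd m with h | h
    exacts [⟨false, by simpa using h.two_dvd⟩, ⟨true, (h.sub_odd odd_one).two_dvd⟩]
  obtain ⟨p, hp⟩ := exists_toInt (a 0)
  let S : Finset (Fin n) := {i | ¬ 4 ∣ a i - p.toInt}
  have residue (i : Fin n) : 4 ∣ a i - residueVec p.toInt S i := by
    have := (ha 0 i).dvd
    simp only [residueVec, S, Finset.mem_filter_univ]
    split_ifs <;> omega
  obtain ⟨m, hm⟩ := Finset.dvd_sum fun i (_ : i ∈ Finset.univ) => residue i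
  obtain ⟨t, ht⟩ := exists_toInt m
  refine ⟨p, S, t, sub_glueVec_mem_fourD.2 ⟨residue, ?_⟩⟩
  omega

theorem glueCoset_bijective : Function.Bijective (glueCoset (n := n)) := by
  refine ⟨glueCoset_injective, fun c => ?_⟩
  obtain ⟨⟨a, ha⟩, rfl⟩ := dualCoset_surjective c
  obtain ⟨p, S, t, h⟩ := exists_sub_glueVec_mem_fourD ha
  exact ⟨(p, S, t), (dualCoset_eq_dualCoset.2 h).symm⟩

theorem nat_card_dualQuot_sqrtTwoD : Nat.card (DualQuot (sqrtTwoD n)) = 2 ^ (n + 2) := by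
  rw [← Nat.card_eq_of_bijective _ (glueCoset_bijective (n := n))]
  simp only [Nat.card_eq_fintype_card, Fintype.card_prod, Fintype.card_bool, Fintype.card_finset,
    Fintype.card_fin]
  ring

theorem cosetMinNorm_glueCoset (g : GlueIndex n) :
    CosetMinNorm (sqrtTwoD n) (glueCoset g) (glueSqNorm g / 8) := by
  refine cosetMinNorm_dualCoset ?_
  rcases g with ⟨_ | _, S, _ | _⟩
  · simpa [glueSqNorm] using isLeast_cosetSqNorms_glueVec_zero (.inl rfl)
  · rcases S.eq_empty_or_nonempty with rfl | hS
    · simpa [glueSqNorm] using isLeast_cosetSqNorms_glueVec_zero_empty odd_one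
    · simpa [glueSqNorm, hS.ne_empty] using isLeast_cosetSqNorms_glueVec_zero (.inr ⟨rfl, hS⟩)
  · simpa [glueSqNorm] using isLeast_cosetSqNorms_glueVec_one_zero
  · simpa [glueSqNorm] using isLeast_cosetSqNorms_glueVec_one_odd odd_one

theorem cosetMinNorm_glueCoset_iff {g : GlueIndex n} {m : ℝ} :
    CosetMinNorm (sqrtTwoD n) (glueCoset g) m ↔ glueSqNorm g / 8 = m :=
  ⟨(cosetMinNorm_glueCoset g).unique, fun h => h ▸ cosetMinNorm_glueCoset g⟩

theorem addOrderOf_glueCoset (hn : Odd n) (g : GlueIndex n) :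
    addOrderOf (glueCoset g) = glueOrder g := by
  rcases g with ⟨_ | _, S, t⟩
  · by_cases h_mem : glueVec 0 0 S t.toInt ∈ fourD n
    · have h_zero : glueCoset (false, S, t) = 0 := dualCoset_eq_zero.2 h_mem
      obtain ⟨rfl, ht⟩ := glueVec_zero_mem_fourD.1 h_mem
      cases t <;> simp_all [glueOrder]
    · have h_even (i : Fin n) : Even (glueVec 0 0 S t.toInt i) :=
        Int.even_iff.2 (glueVec_modEq_two i)
      have h_card : 4 ∣ ∑ i, glueVec 0 0 S t.toInt i ↔ Even S.card := by
        rw [sum_glueVec_zero, Nat.even_iff]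
        omega
      have h_index : ¬(S = ∅ ∧ (!t) = true) := by
        cases t <;> simp_all [glueVec_zero_mem_fourD]
      rw [glueOrder, if_neg h_index]
      exact (addOrderOf_dualCoset_of_even h_even h_mem).trans
        (by simp only [Bool.toInt_false, h_card])
  · exact addOrderOf_dualCoset_of_odd hn fun i => Int.odd_iff.2 (glueVec_modEq_two i)

theorem ncard_cosetMinNorm_addOrderOf (hn : Odd n) (k : ℤ) (o : ℕ) {m : ℝ} (hm : m = k / 8) :
    {c | CosetMinNorm (sqrtTwoD n) c m ∧ addOrderOf c = o}.ncard =
      Finset.card {g : GlueIndex n | glueSqNorm g = k ∧ glueOrder g = o} := by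
  have mem_iff (g : GlueIndex n) :
      glueCoset g ∈ {c | CosetMinNorm (sqrtTwoD n) c m ∧ addOrderOf c = o} ↔
        glueSqNorm g = k ∧ glueOrder g = o := by
    rw [Set.mem_ofPred_eq, addOrderOf_glueCoset hn, cosetMinNorm_glueCoset_iff, hm,
      div_left_inj' (by norm_num), Int.cast_inj]
  rw [← Set.ncard_preimage_of_injective_subset_range glueCoset_injective
    (by simp [glueCoset_bijective.surjective.range_eq]), ← Set.ncard_coe_finset]
  congr 1
  ext g
  rw [Set.mem_preimage, mem_iff, Finset.mem_coe, Finset.mem_filter_univ]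

theorem glueIndex_five_cases (g : GlueIndex 5) :
    glueOrder g = 1 ∨ (glueSqNorm g = 4 ∧ glueOrder g = 4) ∨
      (glueSqNorm g = 5 ∧ glueOrder g = 8) ∨ (glueSqNorm g = 8 ∧ glueOrder g = 2) ∨
      (glueSqNorm g = 12 ∧ glueOrder g = 4) ∨ (glueSqNorm g = 13 ∧ glueOrder g = 8) ∨
      (glueSqNorm g = 16 ∧ glueOrder g = 2) ∨ (glueSqNorm g = 20 ∧ glueOrder g = 4) := by
  revert g
  decide +kernel

end Classification

/-- The quotient `Λ₅♯/Λ₅` has exactly 128 elements: the zero coset, 10 cosets of minimal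
norm 1/2 and order 4, 32 cosets of minimal norm 5/8 and order 8, 20 cosets of minimal
norm 1 and order 2, 20 cosets of minimal norm 3/2 and order 4, 32 cosets of minimal
norm 13/8 and order 8, 11 cosets of minimal norm 2 and order 2, and 2 cosets of minimal
norm 5/2 and order 4. -/
theorem Λ5_dual_quotient_classes :
    Nat.card (DualQuot Λ5) = 128 ∧
    (∀ c : DualQuot Λ5, c = 0 ∨
      (CosetMinNorm Λ5 c (1/2) ∧ addOrderOf c = 4) ∨
      (CosetMinNorm Λ5 c (5/8) ∧ addOrderOf c = 8) ∨
      (CosetMinNorm Λ5 c 1 ∧ addOrderOf c = 2) ∨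
      (CosetMinNorm Λ5 c (3/2) ∧ addOrderOf c = 4) ∨
      (CosetMinNorm Λ5 c (13/8) ∧ addOrderOf c = 8) ∨
      (CosetMinNorm Λ5 c 2 ∧ addOrderOf c = 2) ∨
      (CosetMinNorm Λ5 c (5/2) ∧ addOrderOf c = 4)) ∧
    {c : DualQuot Λ5 | CosetMinNorm Λ5 c (1/2) ∧ addOrderOf c = 4}.ncard = 10 ∧
    {c : DualQuot Λ5 | CosetMinNorm Λ5 c (5/8) ∧ addOrderOf c = 8}.ncard = 32 ∧
    {c : DualQuot Λ5 | CosetMinNorm Λ5 c 1 ∧ addOrderOf c = 2}.ncard = 20 ∧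
    {c : DualQuot Λ5 | CosetMinNorm Λ5 c (3/2) ∧ addOrderOf c = 4}.ncard = 20 ∧
    {c : DualQuot Λ5 | CosetMinNorm Λ5 c (13/8) ∧ addOrderOf c = 8}.ncard = 32 ∧
    {c : DualQuot Λ5 | CosetMinNorm Λ5 c 2 ∧ addOrderOf c = 2}.ncard = 11 ∧
    {c : DualQuot Λ5 | CosetMinNorm Λ5 c (5/2) ∧ addOrderOf c = 4}.ncard = 2 := by
  rw [Λ5_eq_sqrtTwoD]
  have h_odd : Odd 5 := by decide
  refine ⟨nat_card_dualQuot_sqrtTwoD, fun c => ?_, ?_, ?_, ?_, ?_, ?_, ?_, ?_⟩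
  · obtain ⟨g, rfl⟩ := glueCoset_bijective.surjective c
    simp only [← AddMonoid.addOrderOf_eq_one_iff, addOrderOf_glueCoset h_odd,
      cosetMinNorm_glueCoset_iff]
    rcases glueIndex_five_cases g with h | h | h | h | h | h | h | h
    · exact Or.inl h
    all_goals rw [h.1, h.2]; norm_num
  · rw [ncard_cosetMinNorm_addOrderOf h_odd 4 4 (by norm_num)]; decide +kernel
  · rw [ncard_cosetMinNorm_addOrderOf h_odd 5 8 (by norm_num)]; decide +kernel
  · rw [ncard_cosetMinNorm_addOrderOf h_odd 8 2 (by norm_num)]; decide +kernel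
  · rw [ncard_cosetMinNorm_addOrderOf h_odd 12 4 (by norm_num)]; decide +kernel
  · rw [ncard_cosetMinNorm_addOrderOf h_odd 13 8 (by norm_num)]; decide +kernel
  · rw [ncard_cosetMinNorm_addOrderOf h_odd 16 2 (by norm_num)]; decide +kernel
  · rw [ncard_cosetMinNorm_addOrderOf h_odd 20 4 (by norm_num)]; decide +kernel
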